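/- Let (Ȳ_t)_{t∈[0,T]} be a mean-continuous family of Ê-integrable random variables with l_T ≤ Ê[ħ(T, Ȳ_T)] ≤ u_T, and let (Y, R) = BSP̂_l^u(Ȳ, ħ) be the unique solution of the backward Skorokhod problem with sublinear expectation. Then for every t ∈ [0,T]: R_T − R_t = −max{ (Ê[Ȳ_T] − U_T(Ȳ_T))⁺ ∧ inf_{t≤v≤T}(Ê[Ȳ_v] − L_v(Ȳ_v)), sup_{t≤s≤T}[ (Ê[Ȳ_s] − U_s(Ȳ_s)) ∧ inf_{t≤v≤s}(Ê[Ȳ_v] − L_v(Ȳ_v)) ] }. -/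

import Mathlib

open MeasureTheory Set Filter

/-- The sublinear expectation `Ê[X] = sup_{P ∈ Ps} ∫ X dP`. -/
noncomputable def sublinE {Ω : Type*} [MeasurableSpace Ω] (Ps : Set (Measure Ω)) (X : Ω → ℝ) : ℝ :=
  sSup ((fun P => ∫ ω, X ω ∂P) '' Ps)

/-- `X` is Ê-integrable: measurable, integrable w.r.t. each `P ∈ Ps`, and
`sup_{P ∈ Ps} ∫ |X| dP < ∞`. -/
def EIntegrable {Ω : Type*} [MeasurableSpace Ω] (Ps : Set (Measure Ω)) (X : Ω → ℝ) : Prop :=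
  Measurable X ∧ (∀ P ∈ Ps, Integrable X P) ∧ ∃ M : ℝ, ∀ P ∈ Ps, (∫ ω, |X ω| ∂P) ≤ M

/-- Assumption (H_r) on the barriers `l, u` and the running loss function `hb`,
with constants `0 < cl ≤ cu` and `Ch > 0`. -/
def HrAssumption {Ω : Type*} [MeasurableSpace Ω] (T cl cu Ch : ℝ)
    (l u : ℝ → ℝ) (hb : ℝ → Ω → ℝ → ℝ) : Prop :=
  0 < cl ∧ cl ≤ cu ∧ 0 < Ch ∧
  ContinuousOn l (Icc 0 T) ∧ ContinuousOn u (Icc 0 T) ∧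
  (∃ M : ℝ, ∀ t ∈ Icc (0:ℝ) T, |l t| ≤ M ∧ |u t| ≤ M) ∧
  (∃ ε > 0, ∀ t ∈ Icc (0:ℝ) T, ε ≤ u t - l t) ∧
  (∀ t y, Measurable fun ω => hb t ω y) ∧
  (∀ ε > 0, ∃ δ > 0, ∀ (ω : Ω) (t t' y y' : ℝ),
      |t - t'| + |y - y'| < δ → |hb t ω y - hb t' ω y'| < ε) ∧
  (∀ t ω, StrictMono (hb t ω)) ∧
  (∀ t ω y, |hb t ω y| ≤ Ch * (1 + |y|)) ∧
  (∀ t ω y y', cl * |y - y'| ≤ |hb t ω y - hb t ω y'| ∧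
    |hb t ω y - hb t ω y'| ≤ cu * |y - y'|)

/-- `H̄(t, x, X) = Ê[hb(t, x + X − Ê[X])]`. -/
noncomputable def Hbar {Ω : Type*} [MeasurableSpace Ω] (Ps : Set (Measure Ω))
    (hb : ℝ → Ω → ℝ → ℝ) (t x : ℝ) (X : Ω → ℝ) : ℝ :=
  sublinE Ps (fun ω => hb t ω (x + X ω - sublinE Ps X))

/-- A family `(S_t)_{t ∈ [0,T]}` of Ê-integrable random variables which is continuous in mean. -/
def MeanContinuous {Ω : Type*} [MeasurableSpace Ω] (Ps : Set (Measure Ω)) (T : ℝ)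
    (S : ℝ → Ω → ℝ) : Prop :=
  (∀ t ∈ Icc (0:ℝ) T, EIntegrable Ps (S t)) ∧
  ∀ t ∈ Icc (0:ℝ) T,
    Tendsto (fun s => sublinE Ps fun ω => |S s ω - S t ω|) (nhdsWithin t (Icc 0 T)) (nhds 0)

/-- The minimality (Skorokhod) condition in its equivalent increment form: `R` may only
increase on intervals where `φ` stays strictly below `u` and may only decrease on intervals
where `φ` stays strictly above `l`. -/
def MinimalityIncr (T : ℝ) (φ l u R : ℝ → ℝ) : Prop :=
  ∀ s t : ℝ, 0 ≤ s → s < t → t ≤ T →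
    ((∀ v, s < v → v ≤ t → φ v < u v) → R s ≤ R t) ∧
    ((∀ v, s < v → v ≤ t → l v < φ v) → R t ≤ R s)

/-- `(Y, R)` solves the backward Skorokhod problem with sublinear expectation for the data
`(Ybar, hb, l, u)`. -/
def IsBSPsol {Ω : Type*} [MeasurableSpace Ω] (Ps : Set (Measure Ω)) (T : ℝ)
    (hb : ℝ → Ω → ℝ → ℝ) (l u : ℝ → ℝ) (Ybar Y : ℝ → Ω → ℝ) (R : ℝ → ℝ) : Prop :=
  (∀ t ∈ Icc (0:ℝ) T, ∀ ω, Y t ω = Ybar t ω + R T - R t) ∧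
  (∀ t ∈ Icc (0:ℝ) T, l t ≤ sublinE Ps (fun ω => hb t ω (Y t ω)) ∧
    sublinE Ps (fun ω => hb t ω (Y t ω)) ≤ u t) ∧
  ContinuousOn R (Icc 0 T) ∧ BoundedVariationOn R (Icc 0 T) ∧ R 0 = 0 ∧
  MinimalityIncr T (fun v => sublinE Ps (fun ω => hb v ω (Y v ω))) l u R

/-!
Since `Y` and `Ȳ` differ by a deterministic shift, `Ê[ħ(v, Y_v)] = H̄(v, R_T - R_v + Ê[Ȳ_v], Ȳ_v)`,
and strict monotonicity of `x ↦ H̄(v, x, Ȳ_v)` turns the constraints and the minimality condition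
into a deterministic reflection problem: `k = R - R_T` lies between `a = Ê[Ȳ] - U(Ȳ)` and
`b = Ê[Ȳ] - L(Ȳ)`, forward in time it decreases only where `k = a` and increases only where
`k = b`, and `k_T = 0`. If the formula failed at `t`, then `k` would reach a level `c` strictly
between its two sides at some first time `r > t`. The choice of `c` keeps `k` off `b` on `(t, r]`
if `k_t < c`, and off `a` if `c < k_t`, so `k` cannot have moved from `k_t` to `c`.
-/

section Reflection

variable {α β : Type*} [ConditionallyCompleteLinearOrder α] [TopologicalSpace α] [OrderTopology α]
  [DenselyOrdered α] [TopologicalSpace β] {t s T : α}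

theorem exists_first_eq [LinearOrder β] [OrderClosedTopology β] {f : α → β} {c : β} (hts : t ≤ s)
    (hf : ContinuousOn f (Icc t s)) (ht : f t < c) (hs : c ≤ f s) :
    ∃ r ∈ Ioc t s, f r = c ∧ ∀ v ∈ Ico t r, f v < c := by
  have hcompact : IsCompact (Icc t s ∩ f ⁻¹' {c}) :=
    isCompact_Icc.of_isClosed_subset
      (hf.preimage_isClosed_of_isClosed isClosed_Icc isClosed_singleton) inter_subset_left
  obtain ⟨r, ⟨⟨htr, hrs⟩, hr⟩, hleast⟩ :=
    hcompact.exists_isLeast (intermediate_value_Icc hts hf ⟨ht.le, hs⟩)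
  have htr' : t < r := htr.lt_of_ne (by rintro rfl; exact ht.ne hr)
  refine ⟨r, ⟨htr', hrs⟩, hr, fun v hv => not_le.1 fun hcv => ?_⟩
  obtain ⟨w, hw, hwc⟩ := intermediate_value_Icc hv.1
    (hf.mono (Icc_subset_Icc_right (hv.2.le.trans hrs))) ⟨ht.le, hcv⟩
  exact (hleast ⟨⟨hw.1, hw.2.trans (hv.2.le.trans hrs)⟩, hwc⟩).not_gt (hw.2.trans_lt hv.2)

theorem min_le_of_forall_le_barrier [LinearOrder β] [OrderClosedTopology β] [DenselyOrdered β]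
    {k b : α → β} {m : β} (hts : t ≤ s) (hk : ContinuousOn k (Icc t s))
    (hdec : ∀ r ∈ Ioc t s, (∀ v ∈ Ioc t r, k v < b v) → k r ≤ k t)
    (hm : ∀ v ∈ Icc t s, m ≤ b v) : min (k s) m ≤ k t := by
  by_contra! hlt
  obtain ⟨c, htc, hc⟩ := exists_between hlt
  obtain ⟨hcs, hcm⟩ := lt_min_iff.1 hc
  obtain ⟨r, hr, hrc, hbefore⟩ := exists_first_eq hts hk htc hcs.le
  have hbelow : ∀ v ∈ Ioc t r, k v < b v := by
    intro v hv
    have hvc : k v ≤ c := by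
      rcases hv.2.lt_or_eq with h | rfl
      exacts [(hbefore v ⟨hv.1.le, h⟩).le, hrc.le]
    exact hvc.trans_lt (hcm.trans_le (hm v ⟨hv.1.le, hv.2.trans hr.2⟩))
  exact (hdec r hr hbelow).not_gt (hrc.symm ▸ htc)

theorem le_of_lt_of_barrier_lt [LinearOrder β] [OrderClosedTopology β]
    {k a : α → β} {c : β} (hts : t ≤ s) (hk : ContinuousOn k (Icc t s))
    (hinc : ∀ r ∈ Ioc t s, (∀ v ∈ Ioc t r, a v < k v) → k t ≤ k r) (hs : k s < c)
    (ha : ∀ r ∈ Ioc t s, (∀ v ∈ Icc t r, c ≤ k v) → a r < c) : k t ≤ c := by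
  by_contra! hct
  obtain ⟨r, hr, hrc : k r = c, hbefore : ∀ v ∈ Ico t r, c < k v⟩ :=
    exists_first_eq (β := βᵒᵈ) hts hk hct hs.le
  have habove : ∀ v ∈ Icc t r, c ≤ k v := by
    intro v hv
    rcases hv.2.lt_or_eq with h | rfl
    exacts [(hbefore v ⟨hv.1, h⟩).le, hrc.ge]
  refine (hinc r hr fun v hv => ?_).not_gt (hrc.symm ▸ hct)
  exact (ha v ⟨hv.1, hv.2.trans hr.2⟩ fun w hw => habove w ⟨hw.1, hw.2.trans hv.2⟩).trans_le
    (habove v ⟨hv.1.le, hv.2⟩)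

theorem eq_max_of_reflected [ConditionallyCompleteLinearOrder β] [OrderClosedTopology β]
    [DenselyOrdered β] {k a b : α → β} (htT : t ≤ T) (hk : ContinuousOn k (Icc t T))
    (hab : ∀ v ∈ Icc t T, k v ∈ Icc (a v) (b v))
    (hdec : ∀ r ∈ Ioc t T, (∀ v ∈ Ioc t r, k v < b v) → k r ≤ k t)
    (hinc : ∀ r ∈ Ioc t T, (∀ v ∈ Ioc t r, a v < k v) → k t ≤ k r) :
    k t = max (min (k T) (sInf (b '' Icc t T)))
      (sSup ((fun s => min (a s) (sInf (b '' Icc t s))) '' Icc t T)) := by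
  have hlower : ∀ s ∈ Icc t T, min (k s) (sInf (b '' Icc t s)) ≤ k t := by
    intro s hs
    have hkb : ∀ v ∈ Icc t s, k v ≤ b v := fun v hv => (hab v ⟨hv.1, hv.2.trans hs.2⟩).2
    have hks := hk.mono (Icc_subset_Icc_right hs.2)
    obtain ⟨m, hm⟩ := isCompact_Icc.bddBelow_image hks
    have hbdd : BddBelow (b '' Icc t s) :=
      ⟨m, forall_mem_image.2 fun v hv => (hm (mem_image_of_mem k hv)).trans (hkb v hv)⟩
    exact min_le_of_forall_le_barrier hs.1 hks (fun r hr => hdec r ⟨hr.1, hr.2.trans hs.2⟩)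
      fun v hv => csInf_le hbdd (mem_image_of_mem b hv)
  have hlower' : ∀ s ∈ Icc t T, min (a s) (sInf (b '' Icc t s)) ≤ k t := fun s hs =>
    (min_le_min_right _ (hab s hs).1).trans (hlower s hs)
  have hinf : ∀ c, ∀ s ∈ Icc t T, (∀ v ∈ Icc t s, c ≤ k v) → c ≤ sInf (b '' Icc t s) :=
    fun c s hs hc => le_csInf ((nonempty_Icc.2 hs.1).image b) <| forall_mem_image.2 fun v hv =>
      (hc v hv).trans (hab v ⟨hv.1, hv.2.trans hs.2⟩).2
  refine le_antisymm (le_of_forall_gt_imp_ge_of_dense fun c hc => ?_)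
    (max_le (hlower T (right_mem_Icc.2 htT)) ?_)
  · obtain ⟨hcT, hcsup⟩ := max_lt_iff.1 hc
    obtain ⟨s, hs, hsc⟩ : ∃ s ∈ Icc t T, k s < c := by
      by_contra! hge
      have hT : T ∈ Icc t T := right_mem_Icc.2 htT
      exact hcT.not_ge (le_min (hge T hT) (hinf c T hT hge))
    refine le_of_lt_of_barrier_lt hs.1 (hk.mono (Icc_subset_Icc_right hs.2))
      (fun r hr => hinc r ⟨hr.1, hr.2.trans hs.2⟩) hsc fun r hr hge => ?_
    have hrT : r ∈ Icc t T := ⟨hr.1.le, hr.2.trans hs.2⟩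
    have hmin : min (a r) (sInf (b '' Icc t r)) < c :=
      (le_csSup ⟨k t, forall_mem_image.2 hlower'⟩ (mem_image_of_mem _ hrT)).trans_lt hcsup
    exact (min_lt_iff.1 hmin).resolve_right (hinf c r hrT hge).not_gt
  · exact csSup_le ((nonempty_Icc.2 htT).image _) (forall_mem_image.2 hlower')

end Reflection

section SublinearExpectation

variable {Ω : Type*} [MeasurableSpace Ω] {Ps : Set (Measure Ω)} {X Y : Ω → ℝ}

namespace EIntegrable

theorem mono (hY : EIntegrable Ps Y) (hX : Measurable X) (hXY : ∀ ω, |X ω| ≤ Y ω) :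
    EIntegrable Ps X := by
  obtain ⟨-, hYint, M, hM⟩ := hY
  have hint : ∀ P ∈ Ps, Integrable X P := fun P hP =>
    (hYint P hP).mono' hX.aestronglyMeasurable (.of_forall hXY)
  exact ⟨hX, hint, M, fun P hP => (integral_mono (hint P hP).abs (hYint P hP).abs
    fun ω => (hXY ω).trans (le_abs_self _)).trans (hM P hP)⟩

protected theorem abs (hX : EIntegrable Ps X) : EIntegrable Ps fun ω => |X ω| :=
  ⟨hX.1.abs, fun P hP => (hX.2.1 P hP).abs, by simpa only [abs_abs] using hX.2.2⟩

theorem const_mul (c : ℝ) (hX : EIntegrable Ps X) : EIntegrable Ps fun ω => c * X ω := by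
  obtain ⟨hmeas, hint, M, hM⟩ := hX
  refine ⟨hmeas.const_mul c, fun P hP => (hint P hP).const_mul c, |c| * M, fun P hP => ?_⟩
  simpa only [abs_mul, integral_const_mul] using mul_le_mul_of_nonneg_left (hM P hP) (abs_nonneg c)

theorem const_add (hprob : ∀ P ∈ Ps, IsProbabilityMeasure P) (c : ℝ) (hX : EIntegrable Ps X) :
    EIntegrable Ps fun ω => c + X ω := by
  obtain ⟨hmeas, hint, M, hM⟩ := hX
  have hint' : ∀ P ∈ Ps, Integrable (fun ω => c + X ω) P := fun P hP =>
    have := hprob P hP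
    (integrable_const c).add (hint P hP)
  refine ⟨hmeas.const_add c, hint', |c| + M, fun P hP => ?_⟩
  have := hprob P hP
  calc ∫ ω, |c + X ω| ∂P ≤ ∫ ω, (|c| + |X ω|) ∂P :=
        integral_mono (hint' P hP).abs ((integrable_const _).add (hint P hP).abs)
          fun ω => abs_add_le c (X ω)
    _ = |c| + ∫ ω, |X ω| ∂P := by
        rw [integral_add (integrable_const _) (hint P hP).abs, integral_const, probReal_univ,
          one_smul]
    _ ≤ |c| + M := by gcongr; exact hM P hP

theorem integral_le_sublinE (hX : EIntegrable Ps X) {P : Measure Ω} (hP : P ∈ Ps) :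
    ∫ ω, X ω ∂P ≤ sublinE Ps X := by
  obtain ⟨-, hint, M, hM⟩ := hX
  have hbdd : BddAbove ((fun P => ∫ ω, X ω ∂P) '' Ps) :=
    ⟨M, forall_mem_image.2 fun P hP => (integral_mono (hint P hP) (hint P hP).abs
      fun ω => le_abs_self _).trans (hM P hP)⟩
  exact le_csSup hbdd (mem_image_of_mem _ hP)

end EIntegrable

theorem add_sublinE_le (hPs : Ps.Nonempty) (hprob : ∀ P ∈ Ps, IsProbabilityMeasure P)
    (hX : EIntegrable Ps X) (hY : EIntegrable Ps Y) {c : ℝ} (hXY : ∀ ω, c + X ω ≤ Y ω) :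
    c + sublinE Ps X ≤ sublinE Ps Y := by
  rw [← le_sub_iff_add_le']
  refine csSup_le (hPs.image _) (forall_mem_image.2 fun P hP => ?_)
  have := hprob P hP
  rw [le_sub_iff_add_le']
  calc c + ∫ ω, X ω ∂P = ∫ ω, (c + X ω) ∂P := by
        rw [integral_add (integrable_const _) (hX.2.1 P hP), integral_const, probReal_univ,
          one_smul]
    _ ≤ ∫ ω, Y ω ∂P := integral_mono ((integrable_const c).add (hX.2.1 P hP)) (hY.2.1 P hP) hXY
    _ ≤ sublinE Ps Y := hY.integral_le_sublinE hP

end SublinearExpectation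

section RunningLoss

variable {Ω : Type*} [MeasurableSpace Ω]

/-- A running loss `h = ħ(t, ·, ·)` frozen at one time: a Carathéodory function which, uniformly in
`ω`, has linear growth and is strongly increasing in `y`. This is the part of (H_r) that makes
`x ↦ H̄(t, x, X)` strictly increasing; the constants may depend on `t`. -/
structure IsRunningLoss (h : Ω → ℝ → ℝ) : Prop where
  measurable : ∀ y, Measurable fun ω => h ω y
  continuous : ∀ ω, Continuous (h ω)
  linear_growth : ∃ C, ∀ ω y, |h ω y| ≤ C * (1 + |y|)
  strongly_increasing : ∃ c > 0, ∀ ω x y, x < y → c * (y - x) ≤ h ω y - h ω x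

theorem HrAssumption.isRunningLoss {T cl cu Ch : ℝ} {l u : ℝ → ℝ} {hb : ℝ → Ω → ℝ → ℝ}
    (hHr : HrAssumption T cl cu Ch l u hb) (t : ℝ) : IsRunningLoss (hb t) := by
  obtain ⟨hcl, -, -, -, -, -, -, hmeas, -, hmono, hgrowth, hlip⟩ := hHr
  refine ⟨hmeas t, fun ω => ?_, ⟨Ch, hgrowth t⟩, cl, hcl, fun ω x y hxy => ?_⟩
  · exact (LipschitzWith.of_dist_le' fun x y => (hlip t ω x y).2).continuous
  · simpa only [abs_of_pos (sub_pos.2 hxy), abs_of_pos (sub_pos.2 (hmono t ω hxy))]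
      using (hlip t ω y x).1

variable {Ps : Set (Measure Ω)} {X : Ω → ℝ}

theorem IsRunningLoss.eIntegrable_comp {h : Ω → ℝ → ℝ} (hh : IsRunningLoss h)
    (hprob : ∀ P ∈ Ps, IsProbabilityMeasure P) (hX : EIntegrable Ps X) :
    EIntegrable Ps fun ω => h ω (X ω) := by
  obtain ⟨C, hC⟩ := hh.linear_growth
  have hmeas : Measurable (Function.uncurry fun y ω => h ω y) :=
    measurable_uncurry_of_continuous_of_measurable hh.continuous hh.measurable
  exact ((hX.abs.const_add hprob 1).const_mul C).mono (hmeas.comp (hX.1.prodMk measurable_id))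
    fun ω => hC ω (X ω)

theorem IsRunningLoss.strictMono_Hbar {hb : ℝ → Ω → ℝ → ℝ} {t : ℝ} (hh : IsRunningLoss (hb t))
    (hPs : Ps.Nonempty) (hprob : ∀ P ∈ Ps, IsProbabilityMeasure P) (hX : EIntegrable Ps X) :
    StrictMono fun x => Hbar Ps hb t x X := by
  intro x y hxy
  obtain ⟨c, hc, hinc⟩ := hh.strongly_increasing
  have hint (x : ℝ) : EIntegrable Ps fun ω => hb t ω (x + X ω - sublinE Ps X) := by
    refine hh.eIntegrable_comp hprob ?_
    simpa only [add_sub_right_comm] using hX.const_add hprob (x - sublinE Ps X)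
  have hgap : c * (y - x) + Hbar Ps hb t x X ≤ Hbar Ps hb t y X := by
    refine add_sublinE_le hPs hprob (hint x) (hint y) fun ω => ?_
    have := hinc ω (x + X ω - sublinE Ps X) (y + X ω - sublinE Ps X) (by linarith)
    linarith
  exact (lt_add_of_pos_left _ (mul_pos hc (sub_pos.2 hxy))).trans_le hgap

end RunningLoss

namespace IsBSPsol

variable {Ω : Type*} [MeasurableSpace Ω] {Ps : Set (Measure Ω)} {T : ℝ} {hb : ℝ → Ω → ℝ → ℝ}
  {l u : ℝ → ℝ} {Ybar Y : ℝ → Ω → ℝ} {R : ℝ → ℝ} {v x y : ℝ}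

theorem sublinE_loss_eq_Hbar (hsol : IsBSPsol Ps T hb l u Ybar Y R) (hv : v ∈ Icc 0 T) :
    sublinE Ps (fun ω => hb v ω (Y v ω)) =
      Hbar Ps hb v (R T - R v + sublinE Ps (Ybar v)) (Ybar v) := by
  refine congrArg (sublinE Ps) (funext fun ω => ?_)
  rw [hsol.1 v hv ω]
  ring_nf

theorem sublinE_loss_lt_iff (hsol : IsBSPsol Ps T hb l u Ybar Y R) (hv : v ∈ Icc 0 T)
    (hmono : StrictMono fun x => Hbar Ps hb v x (Ybar v)) (hx : Hbar Ps hb v x (Ybar v) = y) :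
    sublinE Ps (fun ω => hb v ω (Y v ω)) < y ↔ sublinE Ps (Ybar v) - x < R v - R T := by
  rw [hsol.sublinE_loss_eq_Hbar hv, ← hx, hmono.lt_iff_lt]
  constructor <;> intro <;> linarith

theorem lt_sublinE_loss_iff (hsol : IsBSPsol Ps T hb l u Ybar Y R) (hv : v ∈ Icc 0 T)
    (hmono : StrictMono fun x => Hbar Ps hb v x (Ybar v)) (hx : Hbar Ps hb v x (Ybar v) = y) :
    y < sublinE Ps (fun ω => hb v ω (Y v ω)) ↔ R v - R T < sublinE Ps (Ybar v) - x := by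
  rw [hsol.sublinE_loss_eq_Hbar hv, ← hx, hmono.lt_iff_lt]
  constructor <;> intro <;> linarith

theorem sub_mem_Icc {xl xu : ℝ} (hsol : IsBSPsol Ps T hb l u Ybar Y R) (hv : v ∈ Icc 0 T)
    (hmono : StrictMono fun x => Hbar Ps hb v x (Ybar v))
    (hxl : Hbar Ps hb v xl (Ybar v) = l v) (hxu : Hbar Ps hb v xu (Ybar v) = u v) :
    R v - R T ∈ Icc (sublinE Ps (Ybar v) - xu) (sublinE Ps (Ybar v) - xl) := by
  obtain ⟨hlv, huv⟩ := hsol.2.1 v hv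
  exact ⟨not_lt.1 fun h => ((hsol.lt_sublinE_loss_iff hv hmono hxu).2 h).not_ge huv,
    not_lt.1 fun h => ((hsol.sublinE_loss_lt_iff hv hmono hxl).2 h).not_ge hlv⟩

end IsBSPsol

theorem stmt7_general {Ω : Type*} [MeasurableSpace Ω] {T : ℝ} {Ps : Set (Measure Ω)}
    (hPs : Ps.Nonempty) (hprob : ∀ P ∈ Ps, IsProbabilityMeasure P)
    {l u L U : ℝ → ℝ} {hb : ℝ → Ω → ℝ → ℝ} (hloss : ∀ t ∈ Icc 0 T, IsRunningLoss (hb t))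
    {Ybar Y : ℝ → Ω → ℝ} {R : ℝ → ℝ} (hYbar : ∀ t ∈ Icc 0 T, EIntegrable Ps (Ybar t))
    (hL : ∀ t ∈ Icc 0 T, Hbar Ps hb t (L t) (Ybar t) = l t)
    (hU : ∀ t ∈ Icc 0 T, Hbar Ps hb t (U t) (Ybar t) = u t)
    (hsol : IsBSPsol Ps T hb l u Ybar Y R) :
    ∀ t ∈ Icc 0 T,
      R T - R t = -(max
        (min (max (sublinE Ps (Ybar T) - U T) 0)
          (sInf ((fun v => sublinE Ps (Ybar v) - L v) '' Icc t T)))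
        (sSup ((fun s => min (sublinE Ps (Ybar s) - U s)
          (sInf ((fun v => sublinE Ps (Ybar v) - L v) '' Icc t s))) '' Icc t T))) := by
  intro t ht
  have hmono : ∀ v ∈ Icc 0 T, StrictMono fun x => Hbar Ps hb v x (Ybar v) := fun v hv =>
    (hloss v hv).strictMono_Hbar hPs hprob (hYbar v hv)
  have hbarrier : ∀ v ∈ Icc 0 T,
      R v - R T ∈ Icc (sublinE Ps (Ybar v) - U v) (sublinE Ps (Ybar v) - L v) := fun v hv =>
    hsol.sub_mem_Icc hv (hmono v hv) (hL v hv) (hU v hv)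
  have ⟨_, _, hRcont, _, _, hmin⟩ := hsol
  have hmem : ∀ {r v : ℝ}, r ∈ Ioc t T → v ∈ Ioc t r → v ∈ Icc 0 T := fun hr hv =>
    ⟨ht.1.trans hv.1.le, hv.2.trans hr.2⟩
  have hformula := eq_max_of_reflected (k := fun v => R v - R T) ht.2
    ((hRcont.mono (Icc_subset_Icc_left ht.1)).sub continuousOn_const)
    (fun v hv => hbarrier v ⟨ht.1.trans hv.1, hv.2⟩)
    (fun r hr hbelow => sub_le_sub_right ((hmin t r ht.1 hr.1 hr.2).2 fun v htv hvr =>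
      have hv := hmem hr ⟨htv, hvr⟩
      (hsol.lt_sublinE_loss_iff hv (hmono v hv) (hL v hv)).2 (hbelow v ⟨htv, hvr⟩)) _)
    (fun r hr habove => sub_le_sub_right ((hmin t r ht.1 hr.1 hr.2).1 fun v htv hvr =>
      have hv := hmem hr ⟨htv, hvr⟩
      (hsol.sublinE_loss_lt_iff hv (hmono v hv) (hU v hv)).2 (habove v ⟨htv, hvr⟩)) _)
  have hterminal : sublinE Ps (Ybar T) - U T ≤ 0 :=
    sub_self (R T) ▸ (hbarrier T ⟨ht.1.trans ht.2, le_rfl⟩).1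
  rw [max_eq_right hterminal, ← sub_self (R T), ← hformula, neg_sub]

/-- explicit formula for the reflecting term of the backward Skorokhod problem
with sublinear expectation. -/
theorem stmt7 {Ω : Type*} [MeasurableSpace Ω] (T cl cu Ch : ℝ) (hT : 0 < T)
    (Ps : Set (Measure Ω)) (hPs : Ps.Nonempty) (hprob : ∀ P ∈ Ps, IsProbabilityMeasure P)
    (l u : ℝ → ℝ) (hb : ℝ → Ω → ℝ → ℝ) (hHr : HrAssumption T cl cu Ch l u hb)
    (L U : ℝ → (Ω → ℝ) → ℝ)
    (hL : ∀ t ∈ Icc (0:ℝ) T, ∀ X : Ω → ℝ, EIntegrable Ps X → Hbar Ps hb t (L t X) X = l t)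
    (hU : ∀ t ∈ Icc (0:ℝ) T, ∀ X : Ω → ℝ, EIntegrable Ps X → Hbar Ps hb t (U t X) X = u t)
    (Ybar : ℝ → Ω → ℝ) (hYbar : MeanContinuous Ps T Ybar)
    (htermL : l T ≤ sublinE Ps fun ω => hb T ω (Ybar T ω))
    (htermU : (sublinE Ps fun ω => hb T ω (Ybar T ω)) ≤ u T)
    (Y : ℝ → Ω → ℝ) (R : ℝ → ℝ) (hsol : IsBSPsol Ps T hb l u Ybar Y R) :
    ∀ t ∈ Icc (0:ℝ) T,
      R T - R t = -(max
        (min (max (sublinE Ps (Ybar T) - U T (Ybar T)) 0)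
          (sInf ((fun v => sublinE Ps (Ybar v) - L v (Ybar v)) '' Icc t T)))
        (sSup ((fun s => min (sublinE Ps (Ybar s) - U s (Ybar s))
          (sInf ((fun v => sublinE Ps (Ybar v) - L v (Ybar v)) '' Icc t s))) '' Icc t T))) :=
  stmt7_general hPs hprob (fun t _ => hHr.isRunningLoss t) hYbar.1
    (fun t ht => hL t ht _ (hYbar.1 t ht)) (fun t ht => hU t ht _ (hYbar.1 t ht)) hsol
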